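/- arXiv:1705.01221 — 6 statements merged into one kernel-verified Lean document; each statement's English description precedes it below -/
import Mathlib

section
/- With A = k ⊗_{𝔽_q} L and σ the Frobenius-on-the-first-factor map, let ζ ∈ L satisfy ζ^r = 1, and for a ∈ k set θ_a = Σ_{i=0}^{r−1} a^{q^i} ⊗ ζ^{−(i+1)} ∈ A. Then: (i) for every a ∈ k, σ(θ_a) = (1 ⊗ ζ)·θ_a; (ii) the 𝔽_q-linear map a ↦ θ_a is not identically zero on k. In particular there exists a ∈ k with θ_a ≠ 0 and σ(θ_a) = (1 ⊗ ζ)·θ_a (a solution to Hilbert's theorem 90 for σ and ζ). -/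
open scoped TensorProduct

/-- The element `θ_a = ∑_{i=0}^{r−1} a^{q^i} ⊗ ζ^{−(i+1)}` of `A = k ⊗_{𝔽_q} L`
(written here in the tensor algebra `L ⊗[F] k`). -/
noncomputable def hilbert90Elt {F k L : Type*} [Field F] [Field k] [Field L]
    [Algebra F k] [Algebra F L] (q r : ℕ) (ζ : L) (a : k) : L ⊗[F] k :=
  ∑ i ∈ Finset.range r, (ζ⁻¹ ^ (i + 1)) ⊗ₜ[F] (a ^ q ^ i)

/-- With `A = k ⊗_{𝔽_q} L` and `σ` the Frobenius on the `k`-factor, and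
`ζ ∈ L` with `ζ^r = 1`: (i) `σ(θ_a) = (1 ⊗ ζ)·θ_a` for all `a ∈ k`; (ii) the `𝔽_q`-linear
map `a ↦ θ_a` is not identically zero; in particular some `a` gives a nonzero solution of
Hilbert's theorem 90 for `σ` and `ζ`. -/
theorem stmt_3 {F k L : Type*} [Field F] [Fintype F] [Field k] [Field L]
    [Algebra F k] [Algebra F L] [FiniteDimensional F k] [FiniteDimensional F L]
    (q r : ℕ) (hq : Fintype.card F = q) (hr : Module.finrank F k = r)
    (σ : (L ⊗[F] k) →ₐ[L] (L ⊗[F] k))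
    (hσ : ∀ (c : L) (x : k), σ (c ⊗ₜ[F] x) = c ⊗ₜ[F] (x ^ q))
    (ζ : L) (hζ : ζ ^ r = 1) :
    (∀ a : k, σ (hilbert90Elt (F := F) q r ζ a) =
        algebraMap L (L ⊗[F] k) ζ * hilbert90Elt (F := F) q r ζ a) ∧
    (∃ a : k, hilbert90Elt (F := F) q r ζ a ≠ 0) ∧
    (∃ a : k, hilbert90Elt (F := F) q r ζ a ≠ 0 ∧
      σ (hilbert90Elt (F := F) q r ζ a) = algebraMap L (L ⊗[F] k) ζ * hilbert90Elt (F := F) q r ζ a) := by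
  classical
  haveI : Finite k := Module.finite_of_finite F
  haveI : Fintype k := Fintype.ofFinite k
  have hrpos : 0 < r := hr ▸ Module.finrank_pos
  have hcard : Fintype.card k = q ^ r := by
    rw [← hq, ← hr]; exact Module.card_eq_pow_finrank
  have hq1 : 1 < q := hq ▸ Fintype.one_lt_card
  have hζ0 : ζ ≠ 0 := by
    rintro rfl
    rw [zero_pow hrpos.ne'] at hζ
    exact zero_ne_one hζ
  have h1 : ∀ a : k, σ (hilbert90Elt (F := F) q r ζ a) =
        algebraMap L (L ⊗[F] k) ζ * hilbert90Elt (F := F) q r ζ a := by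
    intro a
    let g : ℕ → L ⊗[F] k := fun i => (ζ⁻¹ ^ i) ⊗ₜ[F] (a ^ q ^ i)
    have e1 : σ (hilbert90Elt (F := F) q r ζ a) = ∑ i ∈ Finset.range r, g (i + 1) := by
      simp only [hilbert90Elt, map_sum, hσ, g]
      refine Finset.sum_congr rfl fun i _ => ?_
      rw [← pow_mul, ← pow_succ]
    have e2 : algebraMap L (L ⊗[F] k) ζ * hilbert90Elt (F := F) q r ζ a
        = ∑ i ∈ Finset.range r, g i := by
      simp only [hilbert90Elt, Finset.mul_sum, g]
      refine Finset.sum_congr rfl fun i _ => ?_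
      rw [Algebra.TensorProduct.algebraMap_apply, Algebra.TensorProduct.tmul_mul_tmul, one_mul]
      congr 1
      rw [Algebra.algebraMap_self_apply, pow_succ', mul_inv_cancel_left₀ hζ0]
    have e3 : g r = g 0 := by
      have : a ^ q ^ r = a := by rw [← hcard]; exact FiniteField.pow_card a
      simp only [g, this, inv_pow, hζ, pow_zero, inv_one, pow_one]
    rw [e1, e2]
    have := (Finset.sum_range_succ g r).symm.trans (Finset.sum_range_succ' g r)
    rw [e3] at this
    exact (add_right_cancel this).symm
  have h2 : ∃ a : k, hilbert90Elt (F := F) q r ζ a ≠ 0 := by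
    by_contra! hall
    obtain ⟨φ, hφ⟩ : ∃ φ : L →ₗ[F] F, φ ζ⁻¹ ≠ 0 := by
      by_contra! h
      exact inv_ne_zero hζ0 ((Module.forall_dual_apply_eq_zero_iff F _).1 h)
    let Φ : L ⊗[F] k →ₗ[F] k := (TensorProduct.lid F k).toLinearMap ∘ₗ LinearMap.rTensor k φ
    let P : Polynomial k := ∑ i ∈ Finset.range r,
      Polynomial.monomial (q ^ i) (algebraMap F k (φ (ζ⁻¹ ^ (i + 1))))
    have hP : P = 0 := by
      refine Polynomial.eq_zero_of_natDegree_lt_card_of_eval_eq_zero P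
        Function.injective_id (fun a => ?_) ?_
      · have := congrArg Φ (hall a)
        simpa [Φ, P, hilbert90Elt, Polynomial.eval_finset_sum, Algebra.smul_def] using this
      · rw [hcard]
        refine lt_of_le_of_lt (Polynomial.natDegree_sum_le_of_forall_le (n := q ^ (r - 1)) _ _ ?_)
          (Nat.pow_lt_pow_right hq1 (by omega))
        intro i hi
        refine (Polynomial.natDegree_monomial_le _).trans ?_
        exact Nat.pow_le_pow_right (by omega) (by have := Finset.mem_range.1 hi; omega)
    have hc : P.coeff 1 = algebraMap F k (φ ζ⁻¹) := by
      simp only [P, Polynomial.finset_sum_coeff, Polynomial.coeff_monomial]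
      rw [Finset.sum_eq_single 0]
      · simp
      · intro i _ hi
        rw [if_neg]
        exact (Nat.one_lt_pow hi hq1).ne'
      · intro h
        exact absurd (Finset.mem_range.2 hrpos) h
    rw [hP, Polynomial.coeff_zero] at hc
    exact hφ ((map_eq_zero _).1 hc.symm)
  obtain ⟨a, ha⟩ := h2
  exact ⟨h1, ⟨a, ha⟩, ⟨a, ha, h1 a⟩⟩
end

section
/- The map σ : A → A determined by σ(x ⊗ c) = x^q ⊗ c is an automorphism of A = k ⊗_{𝔽_q} L as an L-algebra, and its fixed subalgebra {θ ∈ A : σ(θ) = θ} is exactly 1 ⊗ L, the canonical image of L in A. -/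
open scoped TensorProduct

lemma aux_fixed {F k : Type*} [Field F] [Fintype F] [Field k] [Algebra F k] (x : k)
    (hx : x ^ Fintype.card F = x) : ∃ a : F, algebraMap F k a = x := by
  classical
  have hne : (Polynomial.X ^ Fintype.card F - Polynomial.X : Polynomial k) ≠ 0 :=
    FiniteField.X_pow_card_sub_X_ne_zero k Fintype.one_lt_card
  have hsub : Finset.univ.image (algebraMap F k) ⊆
      (Polynomial.X ^ Fintype.card F - Polynomial.X : Polynomial k).roots.toFinset := by
    intro y hy
    obtain ⟨a, -, rfl⟩ := Finset.mem_image.1 hy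
    rw [Multiset.mem_toFinset, Polynomial.mem_roots hne]
    simp [← map_pow, FiniteField.pow_card]
  have heq := Finset.eq_of_subset_of_card_le hsub (by
    rw [Finset.card_image_of_injective _ (algebraMap F k).injective, Finset.card_univ]
    refine (Multiset.toFinset_card_le _).trans ((Polynomial.card_roots' _).trans ?_)
    rw [FiniteField.X_pow_card_sub_X_natDegree_eq k Fintype.one_lt_card])
  have hm : x ∈ (Polynomial.X ^ Fintype.card F - Polynomial.X : Polynomial k).roots.toFinset := by
    rw [Multiset.mem_toFinset, Polynomial.mem_roots hne]
    simp [hx]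
  rw [← heq] at hm
  obtain ⟨a, -, h⟩ := Finset.mem_image.1 hm
  exact ⟨a, h⟩

/-- The map `σ : A → A` determined by `σ(x ⊗ c) = x^q ⊗ c` is an
automorphism of `A = k ⊗_{𝔽_q} L` as an `L`-algebra (here written as `L ⊗[F] k`, with the
Frobenius acting on the `k`-factor), and its fixed subalgebra `{θ : σ(θ) = θ}` is exactly
the canonical image of `L` in `A`. -/
theorem stmt_4 {F k L : Type*} [Field F] [Fintype F] [Field k] [Field L]
    [Algebra F k] [Algebra F L] [FiniteDimensional F k] [FiniteDimensional F L]
    (q : ℕ) (hq : Fintype.card F = q)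
    (σ : (L ⊗[F] k) →ₐ[L] (L ⊗[F] k))
    (hσ : ∀ (c : L) (x : k), σ (c ⊗ₜ[F] x) = c ⊗ₜ[F] (x ^ q)) :
    Function.Bijective σ ∧
      ∀ θ : L ⊗[F] k, σ θ = θ ↔ θ ∈ (algebraMap L (L ⊗[F] k)).range := by
  classical
  subst hq
  let φ := FiniteField.frobeniusAlgEquivOfAlgebraic F k
  have hφ : ∀ x, φ x = x ^ Fintype.card F := fun x => rfl
  have hcongr : ∀ θ, σ θ = TensorProduct.congr (LinearEquiv.refl F L) φ.toLinearEquiv θ := by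
    intro θ
    induction θ with
    | zero => simp
    | add a b ha hb => rw [map_add, map_add, ha, hb]
    | tmul c x => rw [hσ]; simp [hφ]
  refine ⟨?_, fun θ => ⟨fun h => ?_, ?_⟩⟩
  · rw [show (σ : L ⊗[F] k → L ⊗[F] k) = _ from funext hcongr]
    exact LinearEquiv.bijective _
  · let b := Module.finBasis F L
    let e := TensorProduct.equivFinsuppOfBasisLeft (N := k) b
    have he : ∀ (θ : L ⊗[F] k) i, e (σ θ) i = (e θ i) ^ Fintype.card F := by
      intro θ i
      rw [← hφ]
      induction θ with
      | zero => simp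
      | add a b ha hb => simp only [map_add, Finsupp.add_apply, ha, hb]
      | tmul c x =>
        rw [hσ]
        simp only [e, TensorProduct.equivFinsuppOfBasisLeft_apply_tmul_apply]
        rw [map_smul, hφ]
    have hfix : ∀ i, ∃ a : F, algebraMap F k a = e θ i := fun i =>
      aux_fixed _ (by rw [← he, h])
    rw [← e.symm_apply_apply θ, TensorProduct.equivFinsuppOfBasisLeft_symm_apply]
    refine sum_mem fun i _ => ?_
    obtain ⟨a, ha⟩ := hfix i
    refine ⟨a • b i, ?_⟩
    dsimp only
    rw [← ha, Algebra.algebraMap_eq_smul_one (A := k), ← TensorProduct.smul_tmul]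
    rfl
  · rintro ⟨c, rfl⟩
    exact σ.commutes c
end

section
/- Let ζ ∈ L satisfy ζ^r = 1. If θ, θ′ ∈ A satisfy σ(θ) = (1 ⊗ ζ)·θ and σ(θ′) = (1 ⊗ ζ)·θ′, and θ is a unit of A, then θ′·θ^{−1} lies in 1 ⊗ L (the canonical image of L in A); moreover θ^r itself lies in 1 ⊗ L. -/
open scoped TensorProduct

lemma mem_range_of_pow_card {F k : Type*} [Field F] [Fintype F] [Field k] [Algebra F k]
    (x : k) (hx : x ^ Fintype.card F = x) : ∃ c : F, algebraMap F k c = x := by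
  classical
  have hs : (Polynomial.X ^ Fintype.card F - Polynomial.X : Polynomial F).Splits := by
    rw [Polynomial.splits_iff_card_roots, FiniteField.roots_X_pow_card_sub_X,
      FiniteField.X_pow_card_sub_X_natDegree_eq F Fintype.one_lt_card]
    rfl
  have h := hs.roots_map (algebraMap F k)
  have hm : x ∈ ((Polynomial.X ^ Fintype.card F - Polynomial.X : Polynomial F).map
      (algebraMap F k)).roots := by
    rw [Polynomial.mem_roots (Polynomial.map_ne_zero
      (FiniteField.X_pow_card_sub_X_ne_zero F Fintype.one_lt_card))]
    simp [hx]
  rw [h, Multiset.mem_map] at hm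
  obtain ⟨c, -, hc⟩ := hm
  exact ⟨c, hc⟩

lemma mem_range_of_fixed {F k L : Type*} [Field F] [Fintype F] [Field k] [Field L]
    [Algebra F k] [Algebra F L]
    (σ : (L ⊗[F] k) →ₐ[L] (L ⊗[F] k))
    (hσ : ∀ (c : L) (x : k), σ (c ⊗ₜ[F] x) = c ⊗ₜ[F] (x ^ Fintype.card F))
    (a : L ⊗[F] k) (ha : σ a = a) : a ∈ (algebraMap L (L ⊗[F] k)).range := by
  classical
  let b := Module.Free.chooseBasis F L
  let e := TensorProduct.equivFinsuppOfBasisLeft (N := k) b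
  have key : ∀ (a : L ⊗[F] k) i, e (σ a) i = FiniteField.frobeniusAlgHom F k (e a i) := by
    intro a i
    induction a with
    | zero => simp
    | add x y hx hy => rw [map_add, map_add, map_add, Finsupp.add_apply, Finsupp.add_apply, map_add, hx, hy]
    | tmul c x =>
      rw [hσ, TensorProduct.equivFinsuppOfBasisLeft_apply_tmul_apply,
        TensorProduct.equivFinsuppOfBasisLeft_apply_tmul_apply, map_smul]
      rfl
  have hr : ∀ i, ∃ c : F, algebraMap F k c = e a i := fun i =>
    mem_range_of_pow_card _ (by have := key a i; rw [ha] at this; exact this.symm)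
  rw [← e.symm_apply_apply a, TensorProduct.equivFinsuppOfBasisLeft_symm_apply]
  refine Subring.sum_mem _ fun i _ => ?_
  obtain ⟨c, hc⟩ := hr i
  refine ⟨c • b i, ?_⟩
  simp only [← hc]
  rw [Algebra.TensorProduct.algebraMap_apply, Algebra.algebraMap_eq_smul_one (A := k),
    TensorProduct.tmul_smul, TensorProduct.smul_tmul']
  rfl

/-- In `A = k ⊗_{𝔽_q} L` (written `L ⊗[F] k`, Frobenius `σ` on the
`k`-factor), let `ζ ∈ L` with `ζ^r = 1`. If `θ, θ′` satisfy `σ(θ) = (1 ⊗ ζ)·θ` and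
`σ(θ′) = (1 ⊗ ζ)·θ′`, with `θ` a unit of `A`, then `θ′·θ⁻¹` lies in the canonical image of
`L` in `A`; moreover `θ^r` itself lies in that image. -/
theorem stmt_5 {F k L : Type*} [Field F] [Fintype F] [Field k] [Field L]
    [Algebra F k] [Algebra F L] [FiniteDimensional F k] [FiniteDimensional F L]
    (q r : ℕ) (hq : Fintype.card F = q) (hr : Module.finrank F k = r)
    (σ : (L ⊗[F] k) →ₐ[L] (L ⊗[F] k))
    (hσ : ∀ (c : L) (x : k), σ (c ⊗ₜ[F] x) = c ⊗ₜ[F] (x ^ q))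
    (ζ : L) (hζ : ζ ^ r = 1)
    (θ : (L ⊗[F] k)ˣ) (θ' : L ⊗[F] k)
    (hθ : σ (θ : L ⊗[F] k) = algebraMap L (L ⊗[F] k) ζ * (θ : L ⊗[F] k))
    (hθ' : σ θ' = algebraMap L (L ⊗[F] k) ζ * θ') :
    θ' * ((θ⁻¹ : (L ⊗[F] k)ˣ) : L ⊗[F] k) ∈ (algebraMap L (L ⊗[F] k)).range ∧
      ((θ : L ⊗[F] k)) ^ r ∈ (algebraMap L (L ⊗[F] k)).range := by
  subst hq
  refine ⟨mem_range_of_fixed σ hσ _ ?_, mem_range_of_fixed σ hσ _ ?_⟩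
  · have hu : IsUnit (σ (θ : L ⊗[F] k)) := θ.isUnit.map σ
    apply hu.mul_right_cancel
    rw [← map_mul, Units.inv_mul_cancel_right, hθ, hθ', mul_left_comm, mul_assoc,
      Units.inv_mul, mul_one]
  · rw [map_pow, hθ, mul_pow, ← map_pow, hζ, map_one, one_mul]
end

section
/- Let p be a prime, q = p^t, and let a ∈ 𝔽_q satisfy Tr_{𝔽_q/𝔽_p}(a) ≠ 0 (so that X^p − X − a is irreducible over 𝔽_q). Let α be a root of X^p − X − a in an extension field of 𝔽_q. Then the polynomial X^p − X − a·α^{p−1} is irreducible over the field 𝔽_q(α). -/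
open Polynomial IntermediateField

/-- Iterating `x ^ p = x + c` in characteristic `p`. -/
theorem aux_iter {K : Type*} [Field K] (p : ℕ) [Fact p.Prime] [CharP K p] (x c : K)
    (h : x ^ p - x = c) (n : ℕ) :
    x ^ p ^ n = x + ∑ i ∈ Finset.range n, c ^ p ^ i := by
  induction n with
  | zero => simp
  | succ n ih =>
    have hx : x ^ p = x + c := by rw [← h]; ring
    rw [pow_succ', pow_mul, hx, add_pow_char_pow, ih, Finset.sum_range_succ]
    ring

/-- Artin-Schreier: no root implies irreducible. -/
theorem aux_artin_schreier {K : Type*} [Field K] (p : ℕ) [Fact p.Prime] [CharP K p] (c : K)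
    (h : ∀ x : K, x ^ p - x ≠ c) : Irreducible ((X : K[X]) ^ p - X - C c) := by
  have hp : p.Prime := Fact.out
  have hdeg : ((X : K[X]) + C c).degree < (p : ℕ) := by
    rw [degree_X_add_C]; exact_mod_cast hp.one_lt
  have hm : ((X : K[X]) ^ p - X - C c).Monic := by
    rw [sub_sub]; exact monic_X_pow_sub hdeg
  have hnd : ((X : K[X]) ^ p - X - C c).natDegree = p := by
    rw [natDegree_sub_C, FiniteField.X_pow_card_sub_X_natDegree_eq _ hp.one_lt]
  rw [hm.irreducible_iff_natDegree']
  refine ⟨fun h1 => ?_, ?_⟩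
  · rw [h1, natDegree_one] at hnd
    exact hp.ne_zero hnd.symm
  intro f g hf hg hfg hmem
  rw [hnd, Finset.mem_Ioc] at hmem
  have hlt : g.natDegree < p := by have := hp.two_le; omega
  have hd0 : (g.natDegree : K) ≠ 0 := by
    rw [Ne, CharP.cast_eq_zero_iff K p]
    intro hdvd
    exact absurd (Nat.le_of_dvd hmem.1 hdvd) (by omega)
  let L := AlgebraicClosure K
  haveI : CharP L p := charP_of_injective_algebraMap (algebraMap K L).injective p
  have hs : (g.map (algebraMap K L)).Splits := IsAlgClosed.splits _
  have hroots : ∀ r ∈ (g.map (algebraMap K L)).roots, r ^ p = r + algebraMap K L c := by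
    intro r hr
    have hr' := (mem_roots'.1 hr).2
    rw [IsRoot.def, eval_map_algebraMap] at hr'
    have := congrArg (aeval r) hfg
    simp [hr'] at this
    linear_combination -this
  have hcard : Multiset.card (g.map (algebraMap K L)).roots = g.natDegree := by
    rw [← hs.natDegree_eq_card_roots, natDegree_map]
  have hsum := hs.nextCoeff_eq_neg_sum_roots_of_monic (hg.map _)
  rw [nextCoeff_map_eq] at hsum
  have hpow : (g.map (algebraMap K L)).roots.sum ^ p
      = (g.map (algebraMap K L)).roots.sum + g.natDegree * algebraMap K L c := by
    rw [multiset_sum_pow_char, Multiset.map_congr rfl hroots, Multiset.sum_map_add]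
    simp [hcard]
  have hS : (g.map (algebraMap K L)).roots.sum = algebraMap K L (-g.nextCoeff) := by
    rw [map_neg, hsum, neg_neg]
  rw [hS] at hpow
  have hpow' : (-g.nextCoeff) ^ p = -g.nextCoeff + g.natDegree * c := by
    apply (algebraMap K L).injective
    simpa using hpow
  apply h ((-g.nextCoeff) / g.natDegree)
  have hfix : (g.natDegree : K) ^ p = g.natDegree := by
    have := map_natCast (frobenius K p) g.natDegree
    rwa [frobenius_def] at this
  rw [div_pow, hpow', hfix]
  field_simp
  ring

/-- Power sums over the prime field. -/
theorem aux_powsum {K : Type*} [Field K] (p : ℕ) [Fact p.Prime] [CharP K p] (k : ℕ)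
    (hk : k ≤ p - 1) :
    ∑ j ∈ Finset.range p, (j : K) ^ k = if k = p - 1 then -1 else 0 := by
  have hp : p.Prime := Fact.out
  have key : ∑ j ∈ Finset.range p, (j : ZMod p) ^ k = if k = p - 1 then -1 else 0 := by
    have e : ∑ j ∈ Finset.range p, (j : ZMod p) ^ k = ∑ x : ZMod p, x ^ k := by
      refine Finset.sum_bij (fun j _ => (j : ZMod p)) (by simp) ?_ ?_ (by simp)
      · intro a ha b hb hab
        rw [ZMod.natCast_eq_natCast_iff] at hab
        exact Nat.ModEq.eq_of_lt_of_lt hab (Finset.mem_range.1 ha) (Finset.mem_range.1 hb)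
      · intro b _
        exact ⟨b.val, Finset.mem_range.2 (ZMod.val_lt b), ZMod.natCast_zmod_val b⟩
    rw [e]
    split_ifs with h
    · subst h
      have h1 : ∀ x : ZMod p, x ^ (p - 1) = 1 - if x = 0 then 1 else 0 := by
        intro x
        split_ifs with hx
        · rw [hx, zero_pow (by have := hp.two_le; omega)]; ring
        · rw [ZMod.pow_card_sub_one_eq_one hx]; ring
      simp [h1]
    · exact FiniteField.sum_pow_lt_card_sub_one _ _ (by rw [ZMod.card]; omega)
  have := congrArg (ZMod.castHom (dvd_refl p) K) key
  rw [map_sum] at this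
  simp only [map_pow, map_natCast] at this
  rw [this]
  split_ifs <;> simp

theorem aux_shift {K : Type*} [Field K] (p : ℕ) [Fact p.Prime] [CharP K p] (x T : K)
    (hT : T ≠ 0) (hTp : T ^ p = T) :
    ∑ j ∈ Finset.range p, (x + j * T) ^ (p - 1) = -1 := by
  have hp : p.Prime := Fact.out
  have hT1 : T ^ (p - 1) = 1 := by
    apply mul_right_cancel₀ hT
    rw [← pow_succ, Nat.sub_add_cancel hp.one_le, hTp, one_mul]
  have h1 : ∀ j : ℕ, (x + j * T) ^ (p - 1) = ∑ k ∈ Finset.range p,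
      T ^ k * x ^ (p - 1 - k) * ((p - 1).choose k : K) * (j : K) ^ k := by
    intro j
    rw [add_comm, add_pow, Nat.sub_add_cancel hp.one_le]
    refine Finset.sum_congr rfl fun k _ => ?_
    rw [mul_pow]; ring
  simp_rw [h1]
  rw [Finset.sum_comm]
  simp_rw [← Finset.mul_sum]
  rw [Finset.sum_eq_single (p - 1)]
  · rw [aux_powsum p _ le_rfl]; simp [hT1]
  · intro k hk hne
    rw [Finset.mem_range] at hk
    rw [aux_powsum p k (by omega), if_neg hne, mul_zero]
  · intro hn
    exact absurd (Finset.mem_range.2 (Nat.sub_lt hp.pos one_pos)) hn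

/-- Let `p` be prime, `q = p^t`, `a ∈ 𝔽_q` with nonzero absolute trace
(so `X^p − X − a` is irreducible over `𝔽_q`), and let `α` be a root of `X^p − X − a` in an
extension field of `𝔽_q`. Then `X^p − X − a·α^{p−1}` is irreducible over `𝔽_q(α)`. -/
theorem stmt_8 {F : Type*} [Field F] [Fintype F] (p t : ℕ) (hp : p.Prime) [CharP F p]
    (hcard : Fintype.card F = p ^ t) (a : F)
    (htr : ∑ i ∈ Finset.range t, a ^ p ^ i ≠ 0)
    {Ω : Type*} [Field Ω] [Algebra F Ω] (α : Ω)
    (hα : α ^ p - α = algebraMap F Ω a) :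
    Irreducible ((X : (F⟮α⟯)[X]) ^ p - X -
      C (algebraMap F F⟮α⟯ a * (IntermediateField.AdjoinSimple.gen F α) ^ (p - 1))) := by
  haveI : Fact p.Prime := ⟨hp⟩
  haveI : CharP Ω p := charP_of_injective_algebraMap (algebraMap F Ω).injective p
  haveI : CharP F⟮α⟯ p := charP_of_injective_algebraMap (algebraMap F F⟮α⟯).injective p
  apply aux_artin_schreier p
  intro b hb
  set A : Ω := algebraMap F Ω a with hA
  set β : Ω := (b : Ω) with hβdef
  have hβ : β ^ p - β = A * α ^ (p - 1) := by
    have := congrArg (algebraMap F⟮α⟯ Ω) hb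
    simpa using this
  set T : Ω := ∑ i ∈ Finset.range t, A ^ p ^ i with hTdef
  have hT : T ≠ 0 := by
    have : T = algebraMap F Ω (∑ i ∈ Finset.range t, a ^ p ^ i) := by simp [hTdef, hA]
    rw [this]
    exact (_root_.map_ne_zero _).2 htr
  have hF : ∀ x : F, (algebraMap F Ω x) ^ p ^ t = algebraMap F Ω x := by
    intro x
    rw [← map_pow, ← hcard, FiniteField.pow_card]
  have hAt : A ^ p ^ t = A := hF a
  have hTp : T ^ p = T := by
    rw [hTdef, sum_pow_char]
    simp_rw [← pow_mul, ← pow_succ]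
    have h1 := Finset.sum_range_succ (fun i => A ^ p ^ i) t
    have h2 := Finset.sum_range_succ' (fun i => A ^ p ^ i) t
    rw [h1] at h2
    simp only [hAt, pow_zero, pow_one] at h2
    exact (add_right_cancel h2).symm
  set φ := iterateFrobenius Ω p t with hφ
  have hφd : ∀ x, φ x = x ^ p ^ t := fun x => iterateFrobenius_def ..
  have hφα : φ α = α + T := by rw [hφd]; exact aux_iter p α A hα t
  have hφA : φ A = A := by rw [hφd, hAt]
  have hφT : φ T = T := by
    rw [hTdef, map_sum]; simp_rw [map_pow, hφA]
  have hαn : ∀ n : ℕ, φ^[n] α = α + n * T := by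
    intro n
    induction n with
    | zero => simp
    | succ n ih =>
      rw [Function.iterate_succ_apply', ih, map_add, map_mul, map_natCast, hφα, hφT]
      push_cast; ring
  set g : ℕ → Ω := fun j => ∑ i ∈ Finset.range t, (A * (α + j * T) ^ (p - 1)) ^ p ^ i with hg
  have hφg : ∀ j, φ (g j) = g (j + 1) := by
    intro j
    simp only [hg, map_sum, map_pow, map_mul, map_add, map_natCast, hφA, hφα, hφT]
    refine Finset.sum_congr rfl fun i _ => ?_
    push_cast
    congr 3
    ring
  have hφβ : φ β = β + g 0 := by
    rw [hφd, aux_iter p β _ hβ t]; simp [hg]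
  have hβn : ∀ n : ℕ, φ^[n] β = β + ∑ j ∈ Finset.range n, g j := by
    intro n
    induction n with
    | zero => simp
    | succ n ih =>
      rw [Function.iterate_succ_apply', ih, map_add, map_sum, hφβ, Finset.sum_range_succ']
      simp_rw [hφg]
      ring
  have hfixall : ∀ x ∈ F⟮α⟯, (φ ^ p) x = x := by
    intro x hx
    induction hx using IntermediateField.adjoin_induction with
    | mem x hx =>
      rw [Set.mem_singleton_iff] at hx
      subst hx
      rw [RingHom.coe_pow, hαn]; simp
    | algebraMap x =>
      rw [RingHom.coe_pow]
      exact Function.iterate_fixed (by rw [hφd, hF]) p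
    | add x y _ _ h1 h2 => rw [map_add, h1, h2]
    | inv x _ h1 => rw [map_inv₀, h1]
    | mul x y _ _ h1 h2 => rw [map_mul, h1, h2]
  have hfin := hfixall β b.2
  rw [RingHom.coe_pow, hβn] at hfin
  have hz : ∑ j ∈ Finset.range p, g j = 0 := by simpa using hfin
  apply hT
  rw [hg, Finset.sum_comm] at hz
  simp_rw [← sum_pow_char_pow, ← Finset.mul_sum, aux_shift p α T hT hTp] at hz
  have hneg : ∀ i : ℕ, (A * -1) ^ p ^ i = -(A ^ p ^ i) := by
    intro i
    have := map_neg (iterateFrobenius Ω p i) A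
    rw [iterateFrobenius_def, iterateFrobenius_def] at this
    rw [mul_neg_one, this]
  simp_rw [hneg, Finset.sum_neg_distrib] at hz
  exact neg_eq_zero.1 hz
end

section
/- Let F be a finite field with Q elements, let v be a prime dividing Q − 1 (so v is different from the characteristic of F), and let t be the v-adic valuation of Q − 1. Let K be an extension field of F of degree v^d for some integer d ≥ 0, and let η ∈ F^× satisfy η^{(Q−1)/v} ≠ 1 (i.e. η is not a v-th power in F). Then η possesses a v^d-th root in K, and every θ ∈ K^× with θ^{v^d} = η has multiplicative order whose v-adic valuation equals t + d. -/
theorem aux_dvd (v : ℕ) (Q : ℤ) (hvQ : (v : ℤ) ∣ Q - 1) (d : ℕ) :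
    (Q - 1) * (v : ℤ) ^ d ∣ Q ^ v ^ d - 1 := by
  induction d with
  | zero => simp
  | succ d ih =>
    have h1 : Q ^ v ^ (d + 1) - 1 = (Q ^ v ^ d - 1) * ∑ i ∈ Finset.range v, (Q ^ v ^ d) ^ i := by
      rw [mul_geom_sum, ← pow_mul, pow_succ]
    have h2 : (v : ℤ) ∣ ∑ i ∈ Finset.range v, (Q ^ v ^ d) ^ i := by
      have hR : Q ^ v ^ d ≡ 1 [ZMOD v] := by
        have : Q ≡ 1 [ZMOD v] := (Int.modEq_iff_dvd.2 hvQ).symm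
        simpa using this.pow (v ^ d)
      have h3 : (v : ℤ) ∣ ∑ i ∈ Finset.range v, ((Q ^ v ^ d) ^ i - 1) := by
        refine Finset.dvd_sum fun i _ => ?_
        have := hR.pow i
        rw [one_pow] at this
        exact Int.modEq_iff_dvd.1 this.symm
      rw [Finset.sum_sub_distrib] at h3
      have h4 : (v : ℤ) ∣ ∑ i ∈ Finset.range v, (1 : ℤ) := by simp
      exact (dvd_sub_left h4).1 h3
    rw [h1, pow_succ, ← mul_assoc]
    exact mul_dvd_mul ih h2

theorem aux_dvd_nat (v Q : ℕ) (hQ : 1 ≤ Q) (hvQ : v ∣ Q - 1) (d : ℕ) :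
    (Q - 1) * v ^ d ∣ Q ^ v ^ d - 1 := by
  have h := aux_dvd v Q (by
    have := Int.natCast_dvd_natCast.2 hvQ
    rwa [Nat.cast_sub hQ, Nat.cast_one] at this) d
  rw [← Int.natCast_dvd_natCast]
  push_cast [Nat.cast_sub hQ, Nat.cast_sub (Nat.one_le_pow (v ^ d) Q hQ)]
  exact h

/-- Let `F` be a finite field with `Q` elements, `v` a prime dividing
`Q − 1`, and `t` the `v`-adic valuation of `Q − 1`. Let `K/F` be an extension of degree
`v^d` and let `η ∈ F^×` satisfy `η^{(Q−1)/v} ≠ 1` (i.e. `η` is not a `v`-th power in `F`).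
Then `η` has a `v^d`-th root in `K`, and every `θ ∈ K^×` with `θ^{v^d} = η` has
multiplicative order of `v`-adic valuation exactly `t + d`. -/
theorem stmt_11 {F K : Type*} [Field F] [Fintype F] [Field K] [Algebra F K]
    (Q : ℕ) (hQ : Fintype.card F = Q)
    (v : ℕ) (hv : v.Prime) (hvQ : v ∣ Q - 1)
    (t : ℕ) (ht : t = (Q - 1).factorization v)
    (d : ℕ) (hd : Module.finrank F K = v ^ d)
    (η : F) (hη0 : η ≠ 0) (hη : η ^ ((Q - 1) / v) ≠ 1) :
    (∃ θ : K, θ ^ v ^ d = algebraMap F K η) ∧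
      ∀ θ : K, θ ≠ 0 → θ ^ v ^ d = algebraMap F K η →
        (orderOf θ).factorization v = t + d := by
  have hQ2 : 1 < Q := hQ ▸ Fintype.one_lt_card
  have hQ0 : Q - 1 ≠ 0 := by omega
  have hηQ : η ^ (Q - 1) = 1 := hQ ▸ FiniteField.pow_card_sub_one_eq_one η hη0
  have hvd : v ^ d ≠ 0 := pow_ne_zero _ hv.ne_zero
  have hfin : Module.Finite F K := Module.finite_of_finrank_pos (by rw [hd]; omega)
  have hKfin : Finite K := Module.finite_of_finite F
  have hcard : Nat.card K = Q ^ v ^ d := by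
    rw [Module.natCard_eq_pow_finrank (K := F), hd, Nat.card_eq_fintype_card, hQ]
  have hinj : Function.Injective (algebraMap F K) := (algebraMap F K).injective
  have hηK : algebraMap F K η ≠ 0 := by simpa using hη0
  constructor
  · obtain ⟨g, hg⟩ := IsCyclic.exists_generator (α := Kˣ)
    obtain ⟨k, hk⟩ := (Submonoid.mem_powers_iff _ _).1
      ((mem_powers_iff_mem_zpowers).2 (hg (Units.mk0 _ hηK)))
    have hord : orderOf g = Q ^ v ^ d - 1 := by
      rw [orderOf_eq_card_of_forall_mem_zpowers hg, Nat.card_units, hcard]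
    obtain ⟨c, hc⟩ := aux_dvd_nat v Q hQ2.le hvQ d
    have h1 : g ^ (k * ((Q - 1) * c)) = 1 := by
      rw [pow_mul, hk]
      ext
      simp only [Units.val_pow_eq_pow_val, Units.val_mk0, Units.val_one]
      rw [pow_mul, ← map_pow, hηQ, map_one, one_pow]
    have hN : Q ^ v ^ d - 1 ≠ 0 := by
      have := Nat.one_lt_pow hvd hQ2
      omega
    have h2 := orderOf_dvd_of_pow_eq_one h1
    rw [hord, hc] at h2
    have hc0 : (Q - 1) * c ≠ 0 := by
      intro h
      apply hN
      rw [hc, mul_right_comm, h, zero_mul]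
    have h3 : v ^ d ∣ k := by
      rw [mul_right_comm, mul_comm] at h2
      exact Nat.dvd_of_mul_dvd_mul_right (Nat.pos_of_ne_zero hc0) h2
    obtain ⟨m, rfl⟩ := h3
    refine ⟨(g : K) ^ m, ?_⟩
    have := congrArg Units.val hk
    simp only [Units.val_pow_eq_pow_val, Units.val_mk0] at this
    rw [← this, ← pow_mul, mul_comm]
  · intro θ hθ0 hθ
    have ho : orderOf (algebraMap F K η) = orderOf η :=
      orderOf_injective (algebraMap F K).toMonoidHom hinj η
    have hη1 : (orderOf η).factorization v = t := by
      obtain ⟨k, hk⟩ := orderOf_dvd_of_pow_eq_one hηQ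
      have hvk : ¬ v ∣ k := by
        rintro ⟨m, rfl⟩
        apply hη
        rw [hk, mul_left_comm, Nat.mul_div_cancel_left _ hv.pos, pow_mul, pow_orderOf_eq_one,
          one_pow]
      have hm0 : orderOf η ≠ 0 := by
        intro h
        rw [h, zero_mul] at hk
        exact hQ0 hk
      have hk0 : k ≠ 0 := by
        rintro rfl
        exact hvk (dvd_zero _)
      rw [ht, hk, Nat.factorization_mul hm0 hk0, Finsupp.add_apply,
        Nat.factorization_eq_zero_of_not_dvd hvk, add_zero]
    have ht1 : 1 ≤ t := by
      rw [ht]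
      exact (hv.dvd_iff_one_le_factorization hQ0).1 hvQ
    have hoθ : orderOf θ ≠ 0 := by
      intro h
      have h1 : orderOf (θ ^ v ^ d) = 0 := by
        rw [orderOf_pow' θ hvd, h, Nat.zero_div]
      rw [hθ, ho] at h1
      rw [h1] at hη1
      simp at hη1
      omega
    have h1 := orderOf_pow' θ hvd
    rw [hθ, ho] at h1
    rw [h1, Nat.factorization_div (Nat.gcd_dvd_left _ _), Nat.factorization_gcd hoθ hvd] at hη1
    simp [hv.factorization_self] at hη1
    omega
end

section
/- Let 𝔽_q be a finite field and Ω an extension field of 𝔽_q. Let α, β ∈ Ω be algebraic over 𝔽_q with degrees a = [𝔽_q(α):𝔽_q] and b = [𝔽_q(β):𝔽_q] satisfying gcd(a, b) = 1. Then [𝔽_q(α + β):𝔽_q] = a·b; moreover, if α ≠ 0 and β ≠ 0, then [𝔽_q(α·β):𝔽_q] = a·b. -/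
open IntermediateField

open Function in
lemma aux_add {Ω : Type*} [Field Ω] (f : Ω →+* Ω) {a b d : ℕ} {α β : Ω}
    (hab : Nat.Coprime a b) (ha : IsPeriodicPt f a α) (hb : IsPeriodicPt f b β)
    (hd : IsPeriodicPt f d (α + β)) : IsPeriodicPt f d α := by
  have hs : f^[d] α + f^[d] β = α + β := by
    rw [← iterate_map_add]; exact hd
  obtain ⟨c, hc⟩ : ∃ c, c = f^[d] α - α := ⟨_, rfl⟩
  have hc' : c = β - f^[d] β := by rw [hc]; linear_combination hs
  have pa : IsPeriodicPt f a c := by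
    have h1 : f^[a] (f^[d] α) = f^[d] α := ha.apply_iterate d
    have h2 : f^[a] α = α := ha
    change f^[a] c = c
    rw [hc, iterate_map_sub, h1, h2]
  have pb : IsPeriodicPt f b c := by
    have h1 : f^[b] (f^[d] β) = f^[d] β := hb.apply_iterate d
    have h2 : f^[b] β = β := hb
    change f^[b] c = c
    rw [hc', iterate_map_sub, h1, h2]
  have p1 : IsPeriodicPt f 1 c := by
    have := pa.gcd pb
    rwa [hab] at this
  have pd : f^[d] c = c := by
    have : IsPeriodicPt f d c := p1.trans_dvd (one_dvd d)
    exact this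
  have key : ∀ (x e : Ω), f^[d] e = e → f^[d] x = x + e →
      ∀ k : ℕ, (f^[d])^[k] x = x + k * e := by
    intro x e he hx k
    induction k with
    | zero => simp
    | succ k ih =>
      rw [iterate_succ_apply', ih, iterate_map_add, iterate_map_mul, he, hx,
        iterate_fixed (map_natCast f k)]
      push_cast; ring
  have ka : (a : Ω) * c = 0 := by
    have h1 := key α c pd (by rw [hc]; ring) a
    rw [← iterate_mul] at h1
    have h2 : f^[d * a] α = α := ha.const_mul d
    rw [h2] at h1
    linear_combination -h1
  have kb : (b : Ω) * c = 0 := by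
    have h1 := key β (-c) (by rw [iterate_map_neg, pd]) (by rw [hc']; ring) b
    rw [← iterate_mul] at h1
    have h2 : f^[d * b] β = β := hb.const_mul d
    rw [h2] at h1
    linear_combination h1
  have c0 : c = 0 := by
    obtain ⟨u, v, huv⟩ := Nat.isCoprime_iff_coprime.mpr hab
    have := congrArg (Int.cast : ℤ → Ω) huv
    push_cast at this
    linear_combination u * ka + v * kb - c * this
  change f^[d] α = α
  linear_combination c0 - hc

open Function in
lemma aux_mul {Ω : Type*} [Field Ω] (f : Ω →+* Ω) {a b d : ℕ} {α β : Ω}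
    (hα : α ≠ 0) (hβ : β ≠ 0)
    (hab : Nat.Coprime a b) (ha : IsPeriodicPt f a α) (hb : IsPeriodicPt f b β)
    (hd : IsPeriodicPt f d (α * β)) : IsPeriodicPt f d α := by
  have hs : f^[d] α * f^[d] β = α * β := by
    rw [← iterate_map_mul]; exact hd
  have hβd : f^[d] β ≠ 0 := by
    intro h
    rw [h, mul_zero] at hs
    exact mul_ne_zero hα hβ hs.symm
  have idiv : ∀ (n : ℕ) (x y : Ω), f^[n] (x / y) = f^[n] x / f^[n] y := by
    intro n x y
    rw [← RingHom.coe_pow]; exact map_div₀ _ _ _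
  obtain ⟨c, hc⟩ : ∃ c, c = f^[d] α / α := ⟨_, rfl⟩
  have hc' : c = β / f^[d] β := by
    rw [hc, div_eq_div_iff hα hβd]; linear_combination hs
  have c_ne : c ≠ 0 := by rw [hc']; exact div_ne_zero hβ hβd
  have pa : IsPeriodicPt f a c := by
    have h1 : f^[a] (f^[d] α) = f^[d] α := ha.apply_iterate d
    have h2 : f^[a] α = α := ha
    change f^[a] c = c
    rw [hc, idiv, h1, h2]
  have pb : IsPeriodicPt f b c := by
    have h1 : f^[b] (f^[d] β) = f^[d] β := hb.apply_iterate d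
    have h2 : f^[b] β = β := hb
    change f^[b] c = c
    rw [hc', idiv, h1, h2]
  have p1 : IsPeriodicPt f 1 c := by
    have := pa.gcd pb
    rwa [hab] at this
  have pd : f^[d] c = c := by
    have : IsPeriodicPt f d c := p1.trans_dvd (one_dvd d)
    exact this
  have key : ∀ (x e : Ω), f^[d] e = e → f^[d] x = x * e →
      ∀ k : ℕ, (f^[d])^[k] x = x * e ^ k := by
    intro x e he hx k
    induction k with
    | zero => simp
    | succ k ih =>
      rw [iterate_succ_apply', ih, iterate_map_mul, iterate_map_pow, he, hx]
      ring
  have ka : c ^ a = 1 := by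
    have h1 := key α c pd (by rw [hc]; field_simp) a
    rw [← iterate_mul] at h1
    have h2 : f^[d * a] α = α := ha.const_mul d
    rw [h2] at h1
    exact mul_left_cancel₀ hα (by rw [← h1, mul_one])
  have kb : c ^ b = 1 := by
    have h1 := key β (1 / c) (by rw [idiv, pd, iterate_map_one])
      (by rw [hc']; field_simp) b
    rw [← iterate_mul] at h1
    have h2 : f^[d * b] β = β := hb.const_mul d
    rw [h2] at h1
    have h3 : (1 / c) ^ b = 1 := mul_left_cancel₀ hβ (by rw [← h1, mul_one])
    simpa using h3
  have c1 : c = 1 := by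
    have := pow_gcd_eq_one.2 ⟨ka, kb⟩
    rwa [hab, pow_one] at this
  rw [c1, eq_comm, div_eq_one_iff_eq hα] at hc
  exact hc

open Function in
lemma aux_deg {F Ω : Type*} [Field F] [Fintype F] [Field Ω] [Algebra F Ω]
    {x : Ω} (hx : IsIntegral F x) (n : ℕ) :
    IsPeriodicPt ((FiniteField.frobeniusAlgHom F Ω : Ω →ₐ[F] Ω) : Ω →+* Ω) n x ↔
      Module.finrank F F⟮x⟯ ∣ n := by
  rw [IntermediateField.adjoin.finrank hx,
    (minpoly.irreducible hx).natDegree_dvd_iff_dvd_X_pow_card_pow_sub_X, minpoly.dvd_iff]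
  have : ∀ n : ℕ, (((FiniteField.frobeniusAlgHom F Ω : Ω →ₐ[F] Ω) : Ω →+* Ω))^[n] x
      = x ^ (Nat.card F) ^ n := by
    intro n
    induction n with
    | zero => simp
    | succ n ih =>
      rw [iterate_succ_apply', ih]
      simp [pow_succ, pow_mul]
  rw [IsPeriodicPt, IsFixedPt, this]
  simp [sub_eq_zero]

/-- Let `𝔽_q` be a finite field and `Ω/𝔽_q` an extension. If `α, β ∈ Ω`
are algebraic over `𝔽_q` of coprime degrees `a` and `b`, then `[𝔽_q(α+β):𝔽_q] = a·b`;
moreover if `α ≠ 0` and `β ≠ 0` then `[𝔽_q(α·β):𝔽_q] = a·b`. -/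
theorem stmt_15 {F Ω : Type*} [Field F] [Finite F] [Field Ω] [Algebra F Ω]
    (α β : Ω) (hα : IsIntegral F α) (hβ : IsIntegral F β)
    (a b : ℕ) (ha : Module.finrank F F⟮α⟯ = a) (hb : Module.finrank F F⟮β⟯ = b)
    (hab : Nat.Coprime a b) :
    Module.finrank F F⟮α + β⟯ = a * b ∧
      (α ≠ 0 → β ≠ 0 → Module.finrank F F⟮α * β⟯ = a * b) := by
  have := Fintype.ofFinite F
  have Pα := aux_deg hα
  have Pβ := aux_deg hβ
  have Ps := aux_deg (hα.add hβ)
  have Pm := aux_deg (hα.mul hβ)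
  rw [ha] at Pα
  rw [hb] at Pβ
  have qa := (Pα a).2 dvd_rfl
  have qb := (Pβ b).2 dvd_rfl
  have qa' := (Pα (a * b)).2 (dvd_mul_right _ _)
  have qb' := (Pβ (a * b)).2 (dvd_mul_left _ _)
  constructor
  · apply Nat.dvd_antisymm
    · refine (Ps _).1 ?_
      rw [Function.IsPeriodicPt, Function.IsFixedPt] at *
      rw [iterate_map_add, qa', qb']
    · have h := (Ps _).2 dvd_rfl
      refine hab.mul_dvd_of_dvd_of_dvd ((Pα _).1 (aux_add _ hab qa qb h)) ((Pβ _).1 ?_)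
      exact aux_add _ hab.symm qb qa (add_comm α β ▸ h)
  · intro h0 h1
    apply Nat.dvd_antisymm
    · refine (Pm _).1 ?_
      rw [Function.IsPeriodicPt, Function.IsFixedPt] at *
      rw [iterate_map_mul, qa', qb']
    · have h := (Pm _).2 dvd_rfl
      refine hab.mul_dvd_of_dvd_of_dvd ((Pα _).1 (aux_mul _ h0 h1 hab qa qb h)) ((Pβ _).1 ?_)
      refine aux_mul _ h1 h0 hab.symm qb qa (β := α) ?_
      rw [mul_comm β α]; exact h
end
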